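/- Let n be a positive integer. Then δ(n) < δ(m) for every integer m > n if and only if either n = k² for some positive integer k (in which case δ(n) = 2k) or n = k² + k for some positive integer k (in which case δ(n) = 2k + 1). -/

import Mathlib

/-- `staircaseDelta n` is the minimum of `r + s` over all pairs of positive
integers `(r, s)` with `r ≤ s` and `r * s = n`. -/
noncomputable def staircaseDelta (n : ℕ) : ℕ :=
  sInf {w : ℕ | ∃ r s : ℕ, 0 < r ∧ r ≤ s ∧ r * s = n ∧ w = r + s}

theorem staircaseDelta_spec (n : ℕ) (hn : 0 < n) :
    ∃ r s : ℕ, 0 < r ∧ r ≤ s ∧ r * s = n ∧ staircaseDelta n = r + s := by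
  have h : {w : ℕ | ∃ r s : ℕ, 0 < r ∧ r ≤ s ∧ r * s = n ∧ w = r + s}.Nonempty :=
    ⟨1 + n, 1, n, one_pos, hn, one_mul n, rfl⟩
  exact Nat.sInf_mem h

theorem staircaseDelta_le (r s : ℕ) (hr : 0 < r) (hrs : r ≤ s) :
    staircaseDelta (r * s) ≤ r + s :=
  Nat.sInf_le ⟨r, s, hr, hrs, rfl, rfl⟩

/-- For a positive integer `n`, `δ(n) < δ(m)` for every `m > n` iff either
`n = k^2` (and then `δ(n) = 2k`) or `n = k^2 + k` (and then `δ(n) = 2k + 1`)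
for some positive integer `k`. -/
theorem stmt12 (n : ℕ) (hn : 0 < n) :
    (∀ m : ℕ, n < m → staircaseDelta n < staircaseDelta m) ↔
      (∃ k : ℕ, 0 < k ∧ n = k ^ 2 ∧ staircaseDelta n = 2 * k) ∨
      (∃ k : ℕ, 0 < k ∧ n = k ^ 2 + k ∧ staircaseDelta n = 2 * k + 1) := by
  constructor
  · intro h
    obtain ⟨r, s, hr, hrs, hm, hd⟩ := staircaseDelta_spec n hn
    by_cases h2 : r + 2 ≤ s
    · exfalso
      obtain ⟨t, rfl⟩ := Nat.exists_eq_add_of_le h2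
      have h3 := h ((r + 1) * (r + 1 + t)) (by rw [← hm]; nlinarith)
      have h4 := staircaseDelta_le (r + 1) (r + 1 + t) (by omega) (by omega)
      omega
    · have h5 : s = r ∨ s = r + 1 := by omega
      rcases h5 with rfl | rfl
      · exact Or.inl ⟨s, hr, by rw [← hm]; ring, by omega⟩
      · exact Or.inr ⟨r, hr, by rw [← hm]; ring, by omega⟩
  · intro h m hnm
    obtain ⟨r, s, hr, hrs, hm, hd⟩ := staircaseDelta_spec m (by omega)
    have key : 4 * (r * s) ≤ (r + s) ^ 2 := by
      zify
      nlinarith [sq_nonneg ((r : ℤ) - s)]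
    rcases h with ⟨k, hk, hnk, hdk⟩ | ⟨k, hk, hnk, hdk⟩
    · rw [hdk, hd]
      by_contra! hc
      have := Nat.pow_le_pow_left hc 2
      nlinarith
    · rw [hdk, hd]
      by_contra! hc
      have := Nat.pow_le_pow_left hc 2
      nlinarith
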